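/- Let R be the quotient of ℂ⟨e1,e2,e3⟩ by the two-sided ideal generated by e1e2 − e2e1 − e2, e1e3 − e3e1, e2e3 − e3e2, e2², and e3². Then h_0 = 1 and h_n = 2 for every n ≥ 1; equivalently, the Poincaré series Σ_{n≥0} h_n z^n equals (1+z)/(1−z). -/

import Mathlib

open CategoryTheory FreeAlgebra

/-- `Ext^m_R(ℂ,ℂ)` as a ℂ-module, where `ℂ` is an `R`-module via the augmentation `ε`. -/
noncomputable def extC (R : Type) [Ring R] [Algebra ℂ R] (ε : R →ₐ[ℂ] ℂ) (m : ℕ) :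
    ModuleCat ℂ :=
  letI : Module R ℂ := Module.compHom ℂ ε.toRingHom
  ((Ext ℂ (ModuleCat R) m).obj (Opposite.op (ModuleCat.of R ℂ))).obj (ModuleCat.of R ℂ)

/-- `h_m = dim_ℂ Ext^m_R(ℂ,ℂ)`. -/
noncomputable def extDim (R : Type) [Ring R] [Algebra ℂ R] (ε : R →ₐ[ℂ] ℂ) (m : ℕ) : ℕ :=
  Module.finrank ℂ (extC R ε m)

/-- Relations: `e1e2 - e2e1 = e2`, `e1e3 - e3e1 = 0`, `e2e3 - e3e2 = 0`, `e2² = 0`, `e3² = 0`. -/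
inductive CRel : FreeAlgebra ℂ (Fin 3) → FreeAlgebra ℂ (Fin 3) → Prop
  | r12 : CRel (ι ℂ 0 * ι ℂ 1 - ι ℂ 1 * ι ℂ 0) (ι ℂ 1)
  | r13 : CRel (ι ℂ 0 * ι ℂ 2 - ι ℂ 2 * ι ℂ 0) 0
  | r23 : CRel (ι ℂ 1 * ι ℂ 2 - ι ℂ 2 * ι ℂ 1) 0
  | r22 : CRel (ι ℂ 1 * ι ℂ 1) 0
  | r33 : CRel (ι ℂ 2 * ι ℂ 2) 0


namespace Betti

/-- The algebra `R`. -/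
abbrev RR : Type := RingQuot CRel

noncomputable def gx : RR := RingQuot.mkAlgHom ℂ CRel (ι ℂ 0)
noncomputable def gy : RR := RingQuot.mkAlgHom ℂ CRel (ι ℂ 1)
noncomputable def gz : RR := RingQuot.mkAlgHom ℂ CRel (ι ℂ 2)

lemma rel_xy : gx * gy = gy * gx + gy := by
  have h := RingQuot.mkAlgHom_rel ℂ CRel.r12
  simp only [map_sub, map_mul] at h
  exact (sub_eq_iff_eq_add'.1 h)

lemma rel_xz : gx * gz = gz * gx := by
  have h := RingQuot.mkAlgHom_rel ℂ CRel.r13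
  simp only [map_sub, map_mul, map_zero] at h
  exact (sub_eq_zero.1 h)

lemma rel_yz : gy * gz = gz * gy := by
  have h := RingQuot.mkAlgHom_rel ℂ CRel.r23
  simp only [map_sub, map_mul, map_zero] at h
  exact (sub_eq_zero.1 h)

lemma rel_yy : gy * gy = 0 := by
  have h := RingQuot.mkAlgHom_rel ℂ CRel.r22
  simp only [map_mul, map_zero] at h
  exact h

lemma rel_zz : gz * gz = 0 := by
  have h := RingQuot.mkAlgHom_rel ℂ CRel.r33
  simp only [map_mul, map_zero] at h
  exact h

open Polynomial

/-- The underlying space of the regular representation, with basis `1, y, z, yz` over `ℂ[X]`. -/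
abbrev VV : Type := ℂ[X] × ℂ[X] × ℂ[X] × ℂ[X]

noncomputable def opx : Module.End ℂ VV where
  toFun p := (X * p.1, (X + 1) * p.2.1, X * p.2.2.1, (X + 1) * p.2.2.2)
  map_add' p q := by ext1 <;> simp [mul_add]
  map_smul' c p := by ext1 <;> simp

noncomputable def opy : Module.End ℂ VV where
  toFun p := (0, p.1, 0, p.2.2.1)
  map_add' p q := by simp
  map_smul' c p := by simp

noncomputable def opz : Module.End ℂ VV where
  toFun p := (0, 0, p.1, p.2.1)
  map_add' p q := by simp
  map_smul' c p := by simp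

noncomputable def preRho : FreeAlgebra ℂ (Fin 3) →ₐ[ℂ] Module.End ℂ VV :=
  FreeAlgebra.lift ℂ ![opx, opy, opz]

noncomputable def rho : RR →ₐ[ℂ] Module.End ℂ VV :=
  RingQuot.liftAlgHom ℂ ⟨preRho, by
    intro a b h
    cases h <;> simp only [preRho, map_sub, map_mul, map_zero, FreeAlgebra.lift_ι_apply] <;>
      refine LinearMap.ext fun p => ?_ <;>
      (simp [opx, opy, opz]; try (ring_nf; simp))⟩

lemma rho_x : rho gx = opx := by
  simp [rho, gx, preRho]
lemma rho_y : rho gy = opy := by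
  simp [rho, gy, preRho]
lemma rho_z : rho gz = opz := by
  simp [rho, gz, preRho]

/-- Normal form elements. -/
noncomputable def psi (p : VV) : RR :=
  aeval gx p.1 + gy * aeval gx p.2.1 + gz * aeval gx p.2.2.1 + gy * gz * aeval gx p.2.2.2

lemma psi_add (p q : VV) : psi (p + q) = psi p + psi q := by
  simp [psi, mul_add]; abel

lemma psi_smul (c : ℂ) (p : VV) : psi (c • p) = c • psi p := by
  simp [psi, smul_add]

lemma psi_opx (p : VV) : gx * psi p = psi (opx p) := by
  simp only [psi, opx, LinearMap.coe_mk, AddHom.coe_mk, map_mul, aeval_X, map_add, mul_add,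
    ← mul_assoc, rel_xy, rel_xz, add_mul, one_mul]
  simp only [mul_assoc, rel_xz]

lemma psi_opy (p : VV) : gy * psi p = psi (opy p) := by
  simp only [psi, opy, LinearMap.coe_mk, AddHom.coe_mk, map_zero, mul_add,
    ← mul_assoc, rel_yy]
  simp

lemma psi_opz (p : VV) : gz * psi p = psi (opz p) := by
  have h : gz * gy * gz = 0 := by rw [← rel_yz, mul_assoc, rel_zz, mul_zero]
  simp only [psi, opz, LinearMap.coe_mk, AddHom.coe_mk, map_zero, mul_add,
    ← mul_assoc, rel_zz, h]
  simp [rel_yz]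

lemma psi_rho (r : RR) : ∀ p : VV, r * psi p = psi (rho r p) := by
  obtain ⟨f, rfl⟩ := RingQuot.mkAlgHom_surjective ℂ CRel r
  induction f using FreeAlgebra.induction with
  | grade0 c =>
    intro p
    simp [Algebra.algebraMap_eq_smul_one, psi_smul]
  | grade1 i =>
    intro p
    fin_cases i
    · exact (psi_opx p).trans (by rw [← rho_x]; rfl)
    · exact (psi_opy p).trans (by rw [← rho_y]; rfl)
    · exact (psi_opz p).trans (by rw [← rho_z]; rfl)
  | mul a b ha hb =>
    intro p
    rw [map_mul, map_mul, mul_assoc, hb, ha]; rfl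
  | add a b ha hb =>
    intro p
    rw [map_add, map_add, add_mul, hb, ha, LinearMap.add_apply, psi_add]

noncomputable def phi (r : RR) : VV := rho r (1, 0, 0, 0)

lemma psi_phi (r : RR) : psi (phi r) = r := by
  rw [phi, ← psi_rho]; simp [psi]

lemma opx_pow (p q : ℂ[X]) : aeval opx p (q, 0, 0, 0) = (p * q, 0, 0, 0) := by
  induction p using Polynomial.induction_on' with
  | add a b ha hb => simp [ha, hb, add_mul]
  | monomial n c =>
    induction n with
    | zero => simp [← C_mul', Module.algebraMap_end_apply]
    | succ n ih =>
      rw [← monomial_mul_X, mul_comm, map_mul, Module.End.mul_apply, ih]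
      simp only [opx, LinearMap.coe_mk, AddHom.coe_mk, aeval_X, mul_zero, mul_assoc]

lemma rho_aeval (p : ℂ[X]) : rho (aeval gx p) = aeval opx p := by
  rw [← rho_x, aeval_algHom_apply]

lemma phi_psi (p : VV) : phi (psi p) = p := by
  simp only [phi, psi, map_add, map_mul, rho_aeval, rho_y, rho_z, LinearMap.add_apply,
    Module.End.mul_apply, opx_pow]
  simp [opy, opz]

/-- elements of the exterior-like subalgebra -/
noncomputable def lam (a b c d : ℂ) : RR := a • 1 + b • gy + c • gz + d • (gy * gz)

lemma lam_eq (a b c d : ℂ) : lam a b c d = psi (C a, C b, C c, C d) := by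
  simp [lam, psi, Algebra.algebraMap_eq_smul_one]

noncomputable def gxs (l : ℂ) : RR := gx - algebraMap ℂ RR l

lemma psi_mul_gxs (l : ℂ) (p : VV) : psi p * gxs l =
    psi (p.1 * (X - C l), p.2.1 * (X - C l), p.2.2.1 * (X - C l), p.2.2.2 * (X - C l)) := by
  simp [psi, gxs, add_mul, mul_assoc]

lemma exists_div (l : ℂ) (r : RR) : ∃ a b c d s, r = lam a b c d + s * gxs l := by
  have key : ∀ p : ℂ[X], C (p.eval l) + (p /ₘ (X - C l)) * (X - C l) = p := by
    intro p
    have h := modByMonic_add_div p (X - C l)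
    rwa [modByMonic_X_sub_C_eq_C_eval, mul_comm] at h
  set p := phi r with hp
  refine ⟨p.1.eval l, p.2.1.eval l, p.2.2.1.eval l, p.2.2.2.eval l,
    psi (p.1 /ₘ (X - C l), p.2.1 /ₘ (X - C l), p.2.2.1 /ₘ (X - C l), p.2.2.2 /ₘ (X - C l)), ?_⟩
  rw [lam_eq, psi_mul_gxs, ← psi_add]
  simp only [Prod.mk_add_mk, key]
  rw [hp, psi_phi]

lemma uniq_div (l : ℂ) {a b c d : ℂ} {s : RR} (h : lam a b c d + s * gxs l = 0) :
    a = 0 ∧ b = 0 ∧ c = 0 ∧ d = 0 ∧ s = 0 := by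
  have key : ∀ (a : ℂ) (p : ℂ[X]), C a + p * (X - C l) = 0 → a = 0 ∧ p = 0 := by
    intro a p h
    have h0 : a = 0 := by simpa using congrArg (eval l) h
    subst h0
    refine ⟨rfl, ?_⟩
    simpa [X_sub_C_ne_zero] using h
  rw [← psi_phi s, psi_mul_gxs, lam_eq, ← psi_add] at h
  have h2 := congrArg phi h
  rw [phi_psi] at h2
  have h3 : phi 0 = 0 := by simp [phi]
  rw [h3] at h2
  simp only [Prod.mk_add_mk, Prod.mk_eq_zero] at h2
  obtain ⟨h1, h2, h3, h4⟩ := h2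
  obtain ⟨ha, ha'⟩ := key _ _ h1
  obtain ⟨hb, hb'⟩ := key _ _ h2
  obtain ⟨hc, hc'⟩ := key _ _ h3
  obtain ⟨hd, hd'⟩ := key _ _ h4
  refine ⟨ha, hb, hc, hd, ?_⟩
  rw [← psi_phi s]
  have : phi s = 0 := Prod.ext ha' (Prod.ext hb' (Prod.ext hc' hd'))
  rw [this]; simp [psi]

lemma uniq_lam {a b c d : ℂ} (h : lam a b c d = 0) : a = 0 ∧ b = 0 ∧ c = 0 ∧ d = 0 := by
  have := uniq_div 0 (a := a) (b := b) (c := c) (d := d) (s := 0) (by simpa using h)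
  tauto

lemma gxs_mul_gy (l : ℂ) : gxs (l + 1) * gy = gy * gxs l := by
  simp only [gxs, sub_mul, mul_sub, rel_xy, map_add, map_one, add_mul, one_mul, Algebra.commutes]
  abel

lemma gxs_mul_gz (l : ℂ) : gxs l * gz = gz * gxs l := by
  simp only [gxs, sub_mul, mul_sub, rel_xz, Algebra.commutes]

lemma lam_mul_gy (a b c d : ℂ) : lam a b c d * gy = lam 0 a 0 c := by
  have h : gy * gz * gy = 0 := by rw [rel_yz, mul_assoc, rel_yy, mul_zero]
  simp [lam, add_mul, rel_yy, ← rel_yz, h]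

lemma lam_mul_gz (a b c d : ℂ) : lam a b c d * gz = lam 0 0 a b := by
  simp [lam, add_mul, rel_zz, mul_assoc]

lemma lam_add (a b c d a' b' c' d' : ℂ) :
    lam a b c d + lam a' b' c' d' = lam (a + a') (b + b') (c + c') (d + d') := by
  simp [lam, add_smul]; abel

lemma smul_lam (k a b c d : ℂ) : k • lam a b c d = lam (k * a) (k * b) (k * c) (k * d) := by
  simp [lam, smul_smul]

/-- Koszul type differential. -/
noncomputable def dd (n : ℕ) : (Fin (n + 1) → RR) →ₗ[RR] (Fin n → RR) where
  toFun a i := a i.succ * gy + ((-1 : ℂ) ^ (i : ℕ)) • (a i.castSucc * gz)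
  map_add' a b := by
    funext i
    simp only [Pi.add_apply, add_mul, smul_add]; abel
  map_smul' r a := by
    funext i
    simp only [Pi.smul_apply, smul_eq_mul, RingHom.id_apply, mul_add, mul_smul_comm, mul_assoc]

noncomputable def xx (n : ℕ) : (Fin n → RR) →ₗ[RR] (Fin n → RR) where
  toFun a i := a i * gxs ((i : ℕ) : ℂ)
  map_add' a b := by
    funext i
    simp only [Pi.add_apply, add_mul]
  map_smul' r a := by
    funext i
    simp only [Pi.smul_apply, smul_eq_mul, RingHom.id_apply, mul_assoc]

lemma dd_apply (n : ℕ) (a : Fin (n + 1) → RR) (i : Fin n) :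
    dd n a i = a i.succ * gy + ((-1 : ℂ) ^ (i : ℕ)) • (a i.castSucc * gz) := rfl

lemma xx_apply (n : ℕ) (a : Fin n → RR) (i : Fin n) : xx n a i = a i * gxs ((i : ℕ) : ℂ) := rfl

lemma dd_dd (n : ℕ) (a : Fin (n + 2) → RR) : dd n (dd (n + 1) a) = 0 := by
  funext i
  simp only [dd_apply, Fin.val_succ, Fin.val_castSucc, add_mul, smul_mul_assoc, mul_assoc,
    rel_yy, rel_zz, mul_zero, smul_zero, zero_add, add_zero, smul_add, Pi.zero_apply,
    ← rel_yz, Fin.succ_castSucc, pow_succ, mul_neg, mul_one]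
  rw [← add_smul]; simp

lemma dd_xx (n : ℕ) (a : Fin (n + 1) → RR) : dd n (xx (n + 1) a) = xx n (dd n a) := by
  funext i
  simp only [dd_apply, xx_apply, Fin.val_succ, Fin.val_castSucc, add_mul, smul_mul_assoc, mul_assoc,
    gxs_mul_gz, Nat.cast_add, Nat.cast_one, gxs_mul_gy]

/-- Free modules of the resolution. -/
abbrev PP (n : ℕ) : Type := (Fin (n + 1) → RR) × (Fin n → RR)

noncomputable def del (n : ℕ) : PP (n + 1) →ₗ[RR] PP n :=
  LinearMap.prod ((dd (n + 1)).coprod (xx (n + 1)))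
    (-(dd n ∘ₗ LinearMap.snd RR (Fin (n + 2) → RR) (Fin (n + 1) → RR)))

lemma del_apply (n : ℕ) (v : PP (n + 1)) :
    del n v = (dd (n + 1) v.1 + xx (n + 1) v.2, - dd n v.2) := rfl

lemma del_del (n : ℕ) (v : PP (n + 2)) : del n (del (n + 1) v) = 0 := by
  simp only [del_apply, map_add, dd_dd, dd_xx, map_neg, zero_add, add_neg_cancel, neg_neg,
    Prod.mk_zero_zero]

lemma dd_exact (n : ℕ) (A B C D : Fin (n + 2) → ℂ)
    (h : dd (n + 1) (fun i => lam (A i) (B i) (C i) (D i)) = 0) :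
    ∃ t : Fin (n + 3) → RR, dd (n + 2) t = fun i => lam (A i) (B i) (C i) (D i) := by
  have h1 : ∀ i : Fin (n + 1), A i.succ = 0 ∧ A i.castSucc = 0 ∧
      C i.succ + (-1) ^ (i : ℕ) * B i.castSucc = 0 := by
    intro i
    have h2 := congrFun h i
    simp only [dd_apply, lam_mul_gy, lam_mul_gz, smul_lam, lam_add, Pi.zero_apply] at h2
    obtain ⟨-, h3, h4, h5⟩ := uniq_lam h2
    refine ⟨by simpa using h3, by simpa using h4, h5⟩
  have hA : ∀ i, A i = 0 := by
    intro i
    refine Fin.cases ?_ (fun j => (h1 j).1) i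
    exact (h1 0).2.1
  refine ⟨Fin.cons (lam (C 0) 0 0 0) (fun i => lam (B i) 0 (D i) 0), ?_⟩
  funext i
  rw [dd_apply]
  refine Fin.cases ?_ (fun j => ?_) i
  · simp [lam_mul_gy, lam_mul_gz, lam_add, hA]
  · rw [← Fin.succ_castSucc]
    simp only [Fin.cons_succ, lam_mul_gy, lam_mul_gz, lam_add, smul_lam, hA, Fin.val_succ]
    have h5 := (h1 j).2.2
    have : C j.succ = (-1) ^ ((j : ℕ) + 1) * B j.castSucc := by
      rw [pow_succ]; linear_combination h5
    rw [this]
    simp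

lemma del_exact (n : ℕ) (v : PP (n + 1)) (h : del n v = 0) : ∃ w, del (n + 1) w = v := by
  obtain ⟨a, a'⟩ := v
  rw [del_apply, Prod.mk_eq_zero] at h
  obtain ⟨h1, h2⟩ := h
  choose A B C D s hs using fun i : Fin (n + 2) => exists_div ((i : ℕ) : ℂ) (a i)
  have ha : a = (fun i => lam (A i) (B i) (C i) (D i)) + xx (n + 2) s := funext hs
  have h3 : dd (n + 1) (fun i => lam (A i) (B i) (C i) (D i)) +
      xx (n + 1) (a' + dd (n + 1) s) = 0 := by
    rw [map_add, ← dd_xx, ← h1, ha, map_add]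
    simp only
    abel
  have h4 : a' + dd (n + 1) s = 0 := by
    funext i
    have h5 := congrFun h3 i
    simp only [Pi.add_apply _ (xx _ _), dd_apply, xx_apply _ (_ + _), lam_mul_gy, lam_mul_gz,
      smul_lam, lam_add, Pi.zero_apply] at h5
    exact (uniq_div _ h5).2.2.2.2
  rw [h4, map_zero, add_zero] at h3
  obtain ⟨t, ht⟩ := dd_exact n A B C D h3
  refine ⟨(t, s), ?_⟩
  rw [del_apply, ht, ha]
  refine Prod.ext rfl ?_
  exact (eq_neg_of_add_eq_zero_left h4).symm

section eps

variable (ε : RingQuot CRel →ₐ[ℂ] ℂ)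

/-- The trivial module. -/
def TT (_ε : RingQuot CRel →ₐ[ℂ] ℂ) : Type := ℂ

noncomputable instance : AddCommGroup (TT ε) := inferInstanceAs (AddCommGroup ℂ)

noncomputable instance : Module RR (TT ε) :=
  letI : Module RR ℂ := Module.compHom ℂ ε.toRingHom
  inferInstanceAs (Module RR ℂ)

def toC (c : TT ε) : ℂ := c
def ofC (c : ℂ) : TT ε := c

lemma smul_TT (r : RR) (c : TT ε) : r • c = ofC ε (ε r * toC ε c) := rfl

noncomputable def aug : PP 0 →ₗ[RR] TT ε where
  toFun v := ε (v.1 0)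
  map_add' v w := map_add ε _ _
  map_smul' r v := map_mul ε _ _


lemma eps_gy
    (hε : ∀ i : Fin 3, ε (RingQuot.mkAlgHom ℂ CRel (ι ℂ i)) = 0)
    : ε gy = 0 := hε 1
lemma eps_gz
    (hε : ∀ i : Fin 3, ε (RingQuot.mkAlgHom ℂ CRel (ι ℂ i)) = 0)
    : ε gz = 0 := hε 2
lemma eps_gxs
    (hε : ∀ i : Fin 3, ε (RingQuot.mkAlgHom ℂ CRel (ι ℂ i)) = 0)
    (l : ℂ) : ε (gxs l) = -l := by
  have : ε gx = 0 := hε 0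
  simp [gxs, this]

lemma eps_lam
    (hε : ∀ i : Fin 3, ε (RingQuot.mkAlgHom ℂ CRel (ι ℂ i)) = 0)
    (a b c d : ℂ) : ε (lam a b c d) = a := by
  simp [lam, eps_gy ε hε, eps_gz ε hε]

lemma eps_dd
    (hε : ∀ i : Fin 3, ε (RingQuot.mkAlgHom ℂ CRel (ι ℂ i)) = 0)
    (n : ℕ) (a : Fin (n + 1) → RR) (i : Fin n) : ε (dd n a i) = 0 := by
  simp [dd_apply, eps_gy ε hε, eps_gz ε hε]

lemma eps_xx
    (hε : ∀ i : Fin 3, ε (RingQuot.mkAlgHom ℂ CRel (ι ℂ i)) = 0)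
    (n : ℕ) (a : Fin n → RR) (i : Fin n) : ε (xx n a i) = - (ε (a i) * (i : ℕ)) := by
  simp [xx_apply, eps_gxs ε hε]

lemma aug_del
    (hε : ∀ i : Fin 3, ε (RingQuot.mkAlgHom ℂ CRel (ι ℂ i)) = 0)
    (v : PP 1) : aug ε (del 0 v) = 0 := by
  change ε ((dd 1 v.1 + xx 1 v.2) 0) = 0
  rw [Pi.add_apply, map_add, eps_dd ε hε, eps_xx ε hε]; simp

lemma aug_exact
    (hε : ∀ i : Fin 3, ε (RingQuot.mkAlgHom ℂ CRel (ι ℂ i)) = 0)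
    (v : PP 0) (h : aug ε v = 0) : ∃ w, del 0 w = v := by
  obtain ⟨a, a'⟩ := v
  obtain ⟨A, B, C, D, s, hs⟩ := exists_div 0 (a 0)
  have hA : A = 0 := by
    have h2 : ε (a 0) = 0 := h
    rw [hs, map_add, eps_lam ε hε, map_mul, eps_gxs ε hε] at h2
    simpa using h2
  subst hA
  refine ⟨(![lam C 0 0 0, lam B 0 D 0], ![s]), ?_⟩
  rw [del_apply]
  refine Prod.ext ?_ (Subsingleton.elim _ _)
  funext i
  obtain rfl : i = 0 := Fin.fin_one_eq_zero i
  simp [dd_apply, xx_apply, lam_mul_gy, lam_mul_gz, lam_add, hs]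

end eps

section generic
open Limits

variable {C : Type*} [Category* C] [Abelian C]

lemma mkRes_quasiIso (K : ChainComplex C ℕ) (Z : C) (f : K.X 0 ⟶ Z) (hf : K.d 1 0 ≫ f = 0)
    (h0 : (ShortComplex.mk _ _ hf).Exact) (he : Epi f)
    (hs : ∀ n, (ShortComplex.mk _ _ (K.d_comp_d (n + 2) (n + 1) n)).Exact) :
    QuasiIso ((ChainComplex.toSingle₀Equiv K Z).symm ⟨f, hf⟩) := by
  refine ⟨fun n => ?_⟩
  cases n with
  | zero =>
    rw [ChainComplex.quasiIsoAt₀_iff, ShortComplex.quasiIso_iff_of_zeros']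
    · refine (ShortComplex.exact_and_epi_g_iff_of_iso ?_).2 ⟨h0, he⟩
      refine ShortComplex.isoMk (Iso.refl _) (Iso.refl _) (Iso.refl _) ?_ ?_
      · exact (Category.id_comp _).trans (Category.comp_id _).symm
      · refine (Category.id_comp _).trans (Eq.trans ?_ (Category.comp_id _).symm)
        exact (ChainComplex.toSingle₀Equiv_symm_apply_f_zero f hf).symm
    · exact K.shape _ _ (by simp)
    · rfl
    · rfl
  | succ n =>
    rw [quasiIsoAt_iff_exactAt' (hL := ChainComplex.exactAt_succ_single_obj ..),
      HomologicalComplex.exactAt_iff' _ (n + 2) (n + 1) n (by simp) (by simp)]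
    exact hs n

lemma prod_apply_apply {M N P : Type*} [AddCommGroup M] [AddCommGroup N] [AddCommGroup P]
    [Module ℂ M] [Module ℂ N] [Module ℂ P] (f : M →ₗ[ℂ] N) (g : M →ₗ[ℂ] P) (m : M) :
    f.prod g m = (f m, g m) := rfl

lemma finrank_homology (S : ShortComplex (ModuleCat.{0} ℂ)) (W : Type) [AddCommGroup W] [Module ℂ W]
    (φ : S.X₂ →ₗ[ℂ] W) (h1 : ∀ w, ∃ v, S.g v = 0 ∧ φ v = w)
    (h2 : ∀ v, S.g v = 0 → φ v = 0 → ∃ u, S.f u = v) (h3 : ∀ u, φ (S.f u) = 0) :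
    Module.finrank ℂ S.homology = Module.finrank ℂ W := by
  rw [S.moduleCatHomologyIso.toLinearEquiv.finrank_eq]
  let K := LinearMap.ker S.g.hom
  let ψ : K →ₗ[ℂ] W := φ ∘ₗ K.subtype
  have hψ : Function.Surjective ψ := by
    intro w
    obtain ⟨v, hv, hw⟩ := h1 w
    exact ⟨⟨v, hv⟩, hw⟩
  have hk : LinearMap.range S.moduleCatToCycles = LinearMap.ker ψ := by
    ext ⟨v, hv⟩
    constructor
    · rintro ⟨u, hu⟩
      have : S.f u = v := congrArg Subtype.val hu
      change φ v = 0
      rw [← this, h3]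
    · intro h
      obtain ⟨u, hu⟩ := h2 v hv h
      exact ⟨u, Subtype.ext hu⟩
  change Module.finrank ℂ (K ⧸ LinearMap.range S.moduleCatToCycles) = _
  rw [hk]
  exact (ψ.quotKerEquivOfSurjective hψ).finrank_eq

end generic

noncomputable def KK : ChainComplex (ModuleCat.{0} RR) ℕ :=
  ChainComplex.of (fun n => ModuleCat.of RR (PP n)) (fun n => ModuleCat.ofHom (del n))
    (fun n => by
      ext1
      exact LinearMap.ext fun v => del_del n v)

lemma KK_d (n : ℕ) : KK.d (n + 1) n = ModuleCat.ofHom (del n) :=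
  ChainComplex.of_d (fun n => ModuleCat.of RR (PP n)) (fun n => ModuleCat.ofHom (del n)) n

section main

variable (ε : RingQuot CRel →ₐ[ℂ] ℂ)

noncomputable def augC : KK.X 0 ⟶ ModuleCat.of RR (TT ε) := ModuleCat.ofHom (aug ε)

lemma KK_aug
    (hε : ∀ i : Fin 3, ε (RingQuot.mkAlgHom ℂ CRel (ι ℂ i)) = 0)
    : KK.d 1 0 ≫ augC ε = 0 := by
  rw [KK_d]
  ext1
  exact LinearMap.ext fun v => aug_del ε hε v

noncomputable def res
    (hε : ∀ i : Fin 3, ε (RingQuot.mkAlgHom ℂ CRel (ι ℂ i)) = 0) : ProjectiveResolution (ModuleCat.of RR (TT ε)) where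
  complex := KK
  projective n := by
    change Projective (ModuleCat.of RR (PP n))
    infer_instance
  π := (ChainComplex.toSingle₀Equiv KK _).symm ⟨augC ε, KK_aug ε hε⟩
  quasiIso := by
    apply mkRes_quasiIso
    · rw [ShortComplex.moduleCat_exact_iff]
      intro v hv
      obtain ⟨w, hw⟩ := aug_exact ε hε v hv
      refine ⟨w, ?_⟩
      change KK.d 1 0 w = v
      rw [KK_d]; exact hw
    · rw [ModuleCat.epi_iff_surjective]
      intro c
      refine ⟨((fun _ => algebraMap ℂ RR (toC ε c)), 0), ?_⟩
      exact ε.commutes (toC ε c)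
    · intro n
      rw [ShortComplex.moduleCat_exact_iff]
      intro v hv
      change KK.d (n + 1) n v = 0 at hv
      rw [KK_d] at hv
      obtain ⟨w, hw⟩ := del_exact n v hv
      refine ⟨w, ?_⟩
      change KK.d (n + 2) (n + 1) w = v
      rw [KK_d]; exact hw

/-- The functional with given values on the basis. -/
noncomputable def evl (n : ℕ) (b : Fin (n + 1) → ℂ) (b' : Fin n → ℂ) : PP n →ₗ[RR] TT ε where
  toFun v := ofC ε (∑ i, ε (v.1 i) * b i + ∑ i, ε (v.2 i) * b' i)
  map_add' v w := by
    have h (c d : ℂ) : ofC ε c + ofC ε d = ofC ε (c + d) := rfl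
    rw [h]
    congr 1
    simp [add_mul, Finset.sum_add_distrib]; ring
  map_smul' r v := by
    have h (r : RR) (c : ℂ) : r • ofC ε c = ofC ε (ε r * c) := rfl
    rw [RingHom.id_apply, h]
    congr 1
    simp [mul_assoc, Finset.mul_sum, mul_add]

lemma evl_apply (n : ℕ) (b : Fin (n + 1) → ℂ) (b' : Fin n → ℂ) (v : PP n) :
    evl ε n b b' v = ofC ε (∑ i, ε (v.1 i) * b i + ∑ i, ε (v.2 i) * b' i) := rfl

lemma evl_single (n : ℕ) (b : Fin (n + 1) → ℂ) (b' : Fin n → ℂ) (i) :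
    evl ε n b b' (Pi.single i 1, 0) = ofC ε (b i) := by
  rw [evl_apply]
  congr 1
  simp [Pi.single_apply, apply_ite ε]

lemma evl_single' (n : ℕ) (b : Fin (n + 1) → ℂ) (b' : Fin n → ℂ) (i) :
    evl ε n b b' (0, Pi.single i 1) = ofC ε (b' i) := by
  rw [evl_apply]
  congr 1
  simp [Pi.single_apply, apply_ite ε]

lemma hom_formula (n : ℕ) (f : PP n →ₗ[RR] TT ε) :
    f = evl ε n (fun i => toC ε (f (Pi.single i 1, 0))) (fun i => toC ε (f (0, Pi.single i 1))) := by
  refine LinearMap.prod_ext ?_ ?_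
  · refine LinearMap.pi_ext' fun i => LinearMap.ext_ring ?_
    exact (evl_single ε n (fun i => toC ε (f (Pi.single i 1, 0)))
      (fun i => toC ε (f (0, Pi.single i 1))) i).symm
  · refine LinearMap.pi_ext' fun i => LinearMap.ext_ring ?_
    exact (evl_single' ε n (fun i => toC ε (f (Pi.single i 1, 0)))
      (fun i => toC ε (f (0, Pi.single i 1))) i).symm

lemma evl_del
    (hε : ∀ i : Fin 3, ε (RingQuot.mkAlgHom ℂ CRel (ι ℂ i)) = 0)
    (n : ℕ) (b : Fin (n + 1) → ℂ) (b' : Fin n → ℂ) :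
    evl ε n b b' ∘ₗ del n = evl ε (n + 1) 0 (fun i => - ((i : ℕ) * b i)) := by
  refine LinearMap.ext fun v => ?_
  rw [LinearMap.comp_apply, evl_apply, evl_apply]
  congr 1
  simp [del_apply, eps_dd ε hε, eps_xx ε hε, mul_assoc]

/-- The complex computing Ext. -/
noncomputable abbrev LL : CochainComplex (ModuleCat ℂ) ℕ :=
  KK.linearYonedaObj ℂ (ModuleCat.of RR (TT ε))

/-- The cochain with given values on the basis. -/
noncomputable def cc (n : ℕ) (b : Fin (n + 1) → ℂ) (b' : Fin n → ℂ) : (LL ε).X n :=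
  (ModuleCat.ofHom (evl ε n b b') : KK.X n ⟶ ModuleCat.of RR (TT ε))

lemma LL_d (n : ℕ) (f : KK.X n ⟶ ModuleCat.of RR (TT ε)) :
    (LL ε).d n (n + 1) f = (ModuleCat.ofHom (del n) : KK.X (n + 1) ⟶ KK.X n) ≫ f := by
  rw [← KK_d]; rfl

/-- Evaluation of homomorphisms, as a linear map. -/
noncomputable def evAt (n : ℕ) (v : PP n) : (LL ε).X n →ₗ[ℂ] ℂ where
  toFun f := toC ε ((ModuleCat.Hom.hom (f : KK.X n ⟶ ModuleCat.of RR (TT ε)) : PP n →ₗ[RR] TT ε) v)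
  map_add' f g := rfl
  map_smul' c f := by
    change ε (algebraMap ℂ RR c) * _ = c * _
    rw [ε.commutes]; rfl

lemma extDim_eq
    (hε : ∀ i : Fin 3, ε (RingQuot.mkAlgHom ℂ CRel (ι ℂ i)) = 0)
    (n : ℕ) (W : Type) [AddCommGroup W] [Module ℂ W] (i : ℕ)
    (hi : (ComplexShape.up ℕ).prev n = i) (φ : (LL ε).X n →ₗ[ℂ] W)
    (h1 : ∀ w, ∃ v, (LL ε).d n (n + 1) v = 0 ∧ φ v = w)
    (h2 : ∀ v, (LL ε).d n (n + 1) v = 0 → φ v = 0 → ∃ u, (LL ε).d i n u = v)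
    (h3 : ∀ u, φ ((LL ε).d i n u) = 0) :
    extDim RR ε n = Module.finrank ℂ W := by
  rw [← finrank_homology ((LL ε).sc' i n (n + 1)) W φ h1 h2 h3]
  have e1 := ((res ε hε).isoExt (R := ℂ) n (ModuleCat.of RR (TT ε)))
  have e2 : (LL ε).homology n ≅ ((LL ε).sc' i n (n + 1)).homology :=
    ShortComplex.homologyMapIso ((LL ε).isoSc' i n (n + 1) hi (by simp))
  exact (e1 ≪≫ e2).toLinearEquiv.finrank_eq

lemma cocycle_iff
    (hε : ∀ i : Fin 3, ε (RingQuot.mkAlgHom ℂ CRel (ι ℂ i)) = 0)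
    (n : ℕ) (b : Fin (n + 1) → ℂ) (b' : Fin n → ℂ) :
    (LL ε).d n (n + 1) (cc ε n b b') =
      (cc ε (n + 1) 0 (fun i => - ((i : ℕ) * b i))) := by
  refine (LL_d ε n _).trans ?_
  exact congrArg (fun g : PP (n + 1) →ₗ[RR] TT ε => (ModuleCat.ofHom g :
    ModuleCat.of RR (PP (n + 1)) ⟶ ModuleCat.of RR (TT ε))) (evl_del ε hε n b b')

lemma exists_evl (n : ℕ) (f : (LL ε).X n) : ∃ b b',
    f = (cc ε n b b') := by
  let g : PP n →ₗ[RR] TT ε := ModuleCat.Hom.hom (f : KK.X n ⟶ ModuleCat.of RR (TT ε))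
  exact ⟨fun i => toC ε (g (Pi.single i 1, 0)), fun i => toC ε (g (0, Pi.single i 1)),
    ModuleCat.hom_ext (hom_formula ε n g)⟩

lemma evl_e (n : ℕ) (b : Fin (n + 1) → ℂ) (b' : Fin n → ℂ) (i) :
    evAt ε n (Pi.single i 1, 0) (cc ε n b b') = b i :=
  evl_single ε n b b' i

lemma evl_e' (n : ℕ) (b : Fin (n + 1) → ℂ) (b' : Fin n → ℂ) (i) :
    evAt ε n (0, Pi.single i 1) (cc ε n b b') = b' i :=
  evl_single' ε n b b' i

lemma evl_zero (n : ℕ) : (cc ε n 0 0) = 0 := by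
  refine ModuleCat.hom_ext (LinearMap.ext fun v => ?_)
  refine (evl_apply ε n 0 0 v).trans ?_
  change _ = ofC ε 0
  congr 1
  simp

lemma cocycle_zero
    (hε : ∀ i : Fin 3, ε (RingQuot.mkAlgHom ℂ CRel (ι ℂ i)) = 0)
    (n : ℕ) (b : Fin (n + 1) → ℂ) (b' : Fin n → ℂ)
    (h : (LL ε).d n (n + 1) (cc ε n b b') = 0)
    (i : Fin (n + 1)) (hi : i ≠ 0) : b i = 0 := by
  rw [cocycle_iff ε hε] at h
  have h2 := congrArg (evAt ε (n + 1) (0, Pi.single i 1)) h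
  rw [evl_e', map_zero] at h2
  have : ((i : ℕ) : ℂ) ≠ 0 := by
    rw [Nat.cast_ne_zero]
    exact fun h => hi (Fin.ext h)
  simpa [this, hi] using h2

lemma extDim_zero
    (hε : ∀ i : Fin 3, ε (RingQuot.mkAlgHom ℂ CRel (ι ℂ i)) = 0)
    : extDim RR ε 0 = 1 := by
  rw [extDim_eq ε hε 0 ℂ 0 (by simp) (evAt ε 0 (Pi.single 0 1, 0))]
  · simp
  · intro w
    refine ⟨(cc ε 0 (fun _ => w) 0), ?_, ?_⟩
    · rw [cocycle_iff ε hε]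
      have : (fun i : Fin (0 + 1) => -(((i : ℕ) : ℂ) * w)) = 0 := by
        funext i
        obtain rfl := Fin.fin_one_eq_zero i
        simp
      rw [this]; exact evl_zero ε _
    · rw [evl_e]
  · intro v hv h0
    obtain ⟨b, b', rfl⟩ := exists_evl ε 0 v
    rw [evl_e] at h0
    refine ⟨0, ?_⟩
    have hb : b = 0 := by
      funext i
      obtain rfl := Fin.fin_one_eq_zero i
      exact h0
    have hb' : b' = 0 := Subsingleton.elim _ _
    rw [map_zero, hb, hb']; exact (evl_zero ε 0).symm
  · intro u
    rw [(LL ε).shape 0 0 (by simp)]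
    exact map_zero _

lemma extDim_succ
    (hε : ∀ i : Fin 3, ε (RingQuot.mkAlgHom ℂ CRel (ι ℂ i)) = 0)
    (n : ℕ) : extDim RR ε (n + 1) = 2 := by
  rw [extDim_eq ε hε (n + 1) (ℂ × ℂ) n (by simp)
    ((evAt ε (n + 1) (Pi.single 0 1, 0)).prod (evAt ε (n + 1) (0, Pi.single 0 1)))]
  · simp
  · rintro ⟨w, w'⟩
    refine ⟨(cc ε (n + 1) (Pi.single 0 w) (Pi.single 0 w')), ?_, ?_⟩
    · rw [cocycle_iff ε hε]
      have : (fun i : Fin (n + 1 + 1) => -(((i : ℕ) : ℂ) * (Pi.single 0 w : _ → ℂ) i)) = 0 := by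
        funext i
        by_cases hi : i = 0
        · subst hi; simp
        · simp [hi]
      rw [this]; exact evl_zero ε _
    · rw [prod_apply_apply, evl_e, evl_e']; simp
  · intro v hv h0
    obtain ⟨b, b', rfl⟩ := exists_evl ε (n + 1) v
    rw [prod_apply_apply, evl_e, evl_e', Prod.mk_eq_zero] at h0
    obtain ⟨h0, h0'⟩ := h0
    have hb : b = 0 := by
      funext i
      by_cases hi : i = 0
      · subst hi; exact h0
      · exact cocycle_zero ε hε (n + 1) b b' hv i hi
    refine ⟨(cc ε n (fun i => - (b' i / (i : ℕ))) 0), ?_⟩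
    rw [cocycle_iff ε hε, hb]
    have : (fun i : Fin (n + 1) => -(((i : ℕ) : ℂ) * -(b' i / (i : ℕ)))) = b' := by
      funext i
      by_cases hi : i = 0
      · subst hi; simp [h0']
      · have : ((i : ℕ) : ℂ) ≠ 0 := by
          rw [Nat.cast_ne_zero]
          exact fun h => hi (Fin.ext h)
        field_simp
    rw [this]
  · intro u
    obtain ⟨b, b', rfl⟩ := exists_evl ε n u
    rw [cocycle_iff ε hε, prod_apply_apply, evl_e, evl_e']
    simp

end main

end Betti

theorem betti_numbers (ε : RingQuot CRel →ₐ[ℂ] ℂ)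
    (hε : ∀ i : Fin 3, ε (RingQuot.mkAlgHom ℂ CRel (ι ℂ i)) = 0) :
    (extDim (RingQuot CRel) ε 0 = 1 ∧ ∀ n ≥ 1, extDim (RingQuot CRel) ε n = 2) ∧
    (PowerSeries.mk fun n => (extDim (RingQuot CRel) ε n : ℚ)) * (1 - PowerSeries.X) =
      1 + PowerSeries.X := by
  have h0 := Betti.extDim_zero ε hε
  have hs := Betti.extDim_succ ε hε
  refine ⟨⟨h0, ?_⟩, ?_⟩
  · intro n hn
    obtain ⟨m, rfl⟩ := Nat.exists_eq_add_of_le' hn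
    exact hs m
  · ext n
    rw [mul_sub, mul_one]
    rcases n with _ | _ | n
    · simp [h0]
    · simp [PowerSeries.coeff_succ_mul_X, h0, hs, PowerSeries.coeff_one, PowerSeries.coeff_X]
      norm_num
    · simp [PowerSeries.coeff_succ_mul_X, hs, PowerSeries.coeff_one, PowerSeries.coeff_X]
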